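/- Let p, q > 1 and a ≥ 1. Then arctan_{p,q} is (a,a)-concave on (0,1): for all r, s ∈ (0,1), arctan_{p,q}(((r^a + s^a)/2)^{1/a}) ≥ ((arctan_{p,q}(r)^a + arctan_{p,q}(s)^a)/2)^{1/a}. -/

import Mathlib

open Real Set

/-- `arcsinPQ p q x = ∫₀ˣ (1 - tᵠ)^(-1/p) dt`, the generalized inverse sine. -/
noncomputable def arcsinPQ (p q x : ℝ) : ℝ := ∫ t in (0:ℝ)..x, (1 - t ^ q) ^ (-(1/p))

/-- `sinPQ p q` is the inverse function of `arcsinPQ p q` (restricted to `[0,1]`). -/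
noncomputable def sinPQ (p q : ℝ) : ℝ → ℝ := Function.invFunOn (arcsinPQ p q) (Set.Icc 0 1)

/-- `cosPQ p q x = (1 - sinPQ p q x ^ q)^(1/p)`. -/
noncomputable def cosPQ (p q x : ℝ) : ℝ := (1 - sinPQ p q x ^ q) ^ (1/p)

/-- `tanPQ p q x = sinPQ p q x / cosPQ p q x`. -/
noncomputable def tanPQ (p q x : ℝ) : ℝ := sinPQ p q x / cosPQ p q x

/-- `arctanPQ p q` is the inverse function of `tanPQ p q` (restricted to `(0, π_{p,q}/2)`). -/
noncomputable def arctanPQ (p q : ℝ) : ℝ → ℝ :=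
  Function.invFunOn (tanPQ p q) (Set.Ioo 0 (arcsinPQ p q 1))

/-! As `u` runs over `(0, 1)`, the point `(T u, S u)` with `S = arcsin_{p,q}` and
`T u = u (1 - u^q)^(-1/p)` runs over the graph of `arctan_{p,q}` on `(0, ∞)`. The ratio
`dT / dS = 1 + (q/p) u^q / (1 - u^q)` increases with `u`, so by Cauchy's mean value theorem
`arctan_{p,q}` is concave. A nonnegative concave function on `(0, ∞)` lies below an affine function
`b + c x` with `b, c ≥ 0` touching it at any given point; at the point `M_a(r, s)`, Minkowski's
inequality for this affine function gives `(a,a)`-concavity. -/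

section PowerMean

variable {a : ℝ}

/-- The power mean `M_a(x, y)` of two nonnegative numbers; at `a = 0`, where the
geometric mean would be expected, the value is junk. -/
noncomputable def powerMean (a x y : ℝ) : ℝ := ((x ^ a + y ^ a) / 2) ^ (1 / a)

/-- `f` is `(a,b)`-concave on `s`; meaningful for `a, b ≠ 0`, `s ⊆ (0, ∞)` and `f ≥ 0` on `s`. -/
def PowerMeanConcaveOn (a b : ℝ) (s : Set ℝ) (f : ℝ → ℝ) : Prop :=
  ∀ ⦃x⦄, x ∈ s → ∀ ⦃y⦄, y ∈ s → powerMean b (f x) (f y) ≤ f (powerMean a x y)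

lemma powerMean_pos {x y : ℝ} (hx : 0 < x) (hy : 0 < y) : 0 < powerMean a x y := by
  unfold powerMean
  positivity

lemma powerMean_self (ha : a ≠ 0) {x : ℝ} (hx : 0 ≤ x) : powerMean a x x = x := by
  rw [powerMean, add_self_div_two, one_div, rpow_rpow_inv hx ha]

lemma powerMean_const_mul (ha : a ≠ 0) {c x y : ℝ} (hc : 0 ≤ c) (hx : 0 ≤ x) (hy : 0 ≤ y) :
    powerMean a (c * x) (c * y) = c * powerMean a x y := by
  rw [powerMean, mul_rpow hc hx, mul_rpow hc hy, ← mul_add, mul_div_assoc,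
    mul_rpow (by positivity) (by positivity), one_div, rpow_rpow_inv hc ha, powerMean, one_div]

lemma powerMean_le_powerMean (ha : 0 ≤ a) {x x' y y' : ℝ} (hx : 0 ≤ x) (hy : 0 ≤ y)
    (hxx' : x ≤ x') (hyy' : y ≤ y') : powerMean a x y ≤ powerMean a x' y' := by
  unfold powerMean
  gcongr

lemma powerMean_eq_div {x y : ℝ} (hx : 0 ≤ x) (hy : 0 ≤ y) :
    powerMean a x y = (x ^ a + y ^ a) ^ (1 / a) / 2 ^ (1 / a) :=
  div_rpow (by positivity) zero_le_two _

lemma powerMean_add_le (ha : 1 ≤ a) {x₁ y₁ x₂ y₂ : ℝ} (hx₁ : 0 ≤ x₁) (hy₁ : 0 ≤ y₁)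
    (hx₂ : 0 ≤ x₂) (hy₂ : 0 ≤ y₂) :
    powerMean a (x₁ + x₂) (y₁ + y₂) ≤ powerMean a x₁ y₁ + powerMean a x₂ y₂ := by
  have minkowski := Lp_add_le_of_nonneg (Finset.univ : Finset (Fin 2))
    (f := ![x₁, y₁]) (g := ![x₂, y₂]) ha (by simp [Fin.forall_fin_two, hx₁, hy₁])
    (by simp [Fin.forall_fin_two, hx₂, hy₂])
  simp only [Fin.sum_univ_two, Matrix.cons_val_zero, Matrix.cons_val_one] at minkowski
  rw [powerMean_eq_div (by positivity) (by positivity), powerMean_eq_div hx₁ hy₁,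
    powerMean_eq_div hx₂ hy₂, ← add_div]
  gcongr

lemma powerMean_affine_le (ha : 1 ≤ a) {b c x y : ℝ} (hb : 0 ≤ b) (hc : 0 ≤ c) (hx : 0 ≤ x)
    (hy : 0 ≤ y) : powerMean a (b + c * x) (b + c * y) ≤ b + c * powerMean a x y := by
  have ha₀ : a ≠ 0 := by positivity
  calc powerMean a (b + c * x) (b + c * y)
      ≤ powerMean a b b + powerMean a (c * x) (c * y) :=
        powerMean_add_le ha hb hb (by positivity) (by positivity)
    _ = b + c * powerMean a x y := by
        rw [powerMean_self ha₀ hb, powerMean_const_mul ha₀ hc hx hy]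

end PowerMean

section Concave

lemma exists_supergradient {f : ℝ → ℝ} {S : Set ℝ} {m : ℝ} (hf : ConcaveOn ℝ S f)
    (hm : m ∈ interior S) : ∃ c, ∀ x ∈ S, f x ≤ f m + c * (x - m) := by
  have hmS := interior_subset hm
  refine ⟨-derivWithin (-f) (Ioi m) m, fun x hx => ?_⟩
  rcases lt_trichotomy x m with hxm | rfl | hmx
  · have hslope := (hf.neg.slope_le_leftDeriv_of_mem_interior hx hm hxm).trans
      (hf.neg.leftDeriv_le_rightDeriv_of_mem_interior hm)
    rw [slope_def_field, div_le_iff₀ (sub_pos.2 hxm)] at hslope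
    simp only [Pi.neg_apply] at hslope
    linarith
  · simp
  · have hslope := hf.neg.rightDeriv_le_slope_of_mem_interior hm hx hmx
    rw [slope_def_field, le_div_iff₀ (sub_pos.2 hmx)] at hslope
    simp only [Pi.neg_apply] at hslope
    linarith

open Filter Topology in
lemma nonneg_of_forall_pos_affine_nonneg {b c : ℝ} (h : ∀ x, 0 < x → 0 ≤ b + c * x) :
    0 ≤ b ∧ 0 ≤ c := by
  have hb : 0 ≤ b := by
    have hlim : Tendsto (fun x => b + c * x) (𝓝[>] 0) (𝓝 b) := by
      have hcont : Continuous fun x => b + c * x := by fun_prop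
      simpa using (hcont.tendsto 0).mono_left nhdsWithin_le_nhds
    exact ge_of_tendsto hlim (eventually_mem_nhdsWithin.mono h)
  refine ⟨hb, le_of_not_gt fun hc => ?_⟩
  have hroot := h ((b + 1) / -c) (div_pos (by linarith) (neg_pos.2 hc))
  have : c * ((b + 1) / -c) = -(b + 1) := by
    rw [div_neg, mul_neg, mul_div_cancel₀ _ hc.ne]
  linarith

lemma exists_nonneg_affine_majorant {f : ℝ → ℝ} {m : ℝ} (hf : ConcaveOn ℝ (Ioi 0) f)
    (hf₀ : ∀ x, 0 < x → 0 ≤ f x) (hm : 0 < m) :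
    ∃ b c, 0 ≤ b ∧ 0 ≤ c ∧ f m = b + c * m ∧ ∀ x, 0 < x → f x ≤ b + c * x := by
  obtain ⟨c, hc⟩ := exists_supergradient hf (by rwa [interior_Ioi])
  have hmajorant : ∀ x, 0 < x → f x ≤ f m - c * m + c * x := fun x hx => by
    linarith [hc x hx]
  obtain ⟨hb₀, hc₀⟩ :=
    nonneg_of_forall_pos_affine_nonneg fun x hx => (hf₀ x hx).trans (hmajorant x hx)
  exact ⟨f m - c * m, c, hb₀, hc₀, by ring, hmajorant⟩

lemma powerMeanConcaveOn_of_concaveOn {f : ℝ → ℝ} {a : ℝ} (hf : ConcaveOn ℝ (Ioi 0) f)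
    (hf₀ : ∀ x, 0 < x → 0 ≤ f x) (ha : 1 ≤ a) : PowerMeanConcaveOn a a (Ioi 0) f := by
  intro r hr s hs
  obtain ⟨b, c, hb, hc, hm, hmajorant⟩ :=
    exists_nonneg_affine_majorant hf hf₀ (powerMean_pos (a := a) hr hs)
  calc powerMean a (f r) (f s)
      ≤ powerMean a (b + c * r) (b + c * s) :=
        powerMean_le_powerMean (by positivity) (hf₀ r hr) (hf₀ s hs) (hmajorant r hr)
          (hmajorant s hs)
    _ ≤ b + c * powerMean a r s := powerMean_affine_le ha hb hc (le_of_lt hr) (le_of_lt hs)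
    _ = f (powerMean a r s) := hm.symm

end Concave

section DerivRatio

variable {F G G' k : ℝ → ℝ} {D : Set ℝ}

lemma strictMonoOn_of_hasDerivAt_pos (hD : Convex ℝ D)
    (hG : ∀ t ∈ D, HasDerivAt G (G' t) t) (hG' : ∀ t ∈ D, 0 < G' t) : StrictMonoOn G D :=
  strictMonoOn_of_hasDerivWithinAt_pos hD (HasDerivAt.continuousOn hG)
    (fun t ht => (hG t (interior_subset ht)).hasDerivWithinAt)
    fun t ht => hG' t (interior_subset ht)

lemma exists_deriv_ratio_eq_slope (hD : Convex ℝ D)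
    (hG : ∀ t ∈ D, HasDerivAt G (G' t) t) (hG' : ∀ t ∈ D, 0 < G' t)
    (hF : ∀ t ∈ D, HasDerivAt F (k t * G' t) t) {x y : ℝ} (hx : x ∈ D) (hy : y ∈ D)
    (hxy : x < y) : ∃ t ∈ D, t ∈ Ioo x y ∧ (F y - F x) / (G y - G x) = k t := by
  have hIcc : Icc x y ⊆ D := hD.ordConnected.out hx hy
  have hIoo : Ioo x y ⊆ D := Ioo_subset_Icc_self.trans hIcc
  have hGxy : G x < G y := strictMonoOn_of_hasDerivAt_pos hD hG hG' hx hy hxy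
  obtain ⟨t, ht, hcauchy⟩ := exists_ratio_hasDerivAt_eq_ratio_slope F _ hxy
    ((HasDerivAt.continuousOn hF).mono hIcc) (fun t ht => hF t (hIoo ht)) G _
    ((HasDerivAt.continuousOn hG).mono hIcc) (fun t ht => hG t (hIoo ht))
  refine ⟨t, hIoo ht, ht, ?_⟩
  rw [div_eq_iff (sub_pos.2 hGxy).ne']
  apply mul_right_cancel₀ (hG' t (hIoo ht)).ne'
  linarith

lemma concaveOn_image_of_antitoneOn_deriv_ratio {φ : ℝ → ℝ} (hD : Convex ℝ D)
    (hφ : ∀ t ∈ D, φ (G t) = F t) (hG : ∀ t ∈ D, HasDerivAt G (G' t) t)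
    (hG' : ∀ t ∈ D, 0 < G' t) (hF : ∀ t ∈ D, HasDerivAt F (k t * G' t) t)
    (hk : AntitoneOn k D) : ConcaveOn ℝ (G '' D) φ := by
  have hmono : StrictMonoOn G D := strictMonoOn_of_hasDerivAt_pos hD hG hG'
  have himage : Convex ℝ (G '' D) :=
    convex_iff_isPreconnected.2 (hD.isPreconnected.image G (HasDerivAt.continuousOn hG))
  refine concaveOn_of_slope_anti_adjacent himage ?_
  intro X Y Z hX hZ hXY hYZ
  obtain ⟨y, hy, rfl⟩ := himage.ordConnected.out hX hZ ⟨hXY.le, hYZ.le⟩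
  obtain ⟨x, hx, rfl⟩ := hX
  obtain ⟨z, hz, rfl⟩ := hZ
  rw [hφ x hx, hφ y hy, hφ z hz]
  obtain ⟨t, htD, ht, hslope_xy⟩ :=
    exists_deriv_ratio_eq_slope hD hG hG' hF hx hy ((hmono.lt_iff_lt hx hy).1 hXY)
  obtain ⟨t', htD', ht', hslope_yz⟩ :=
    exists_deriv_ratio_eq_slope hD hG hG' hF hy hz ((hmono.lt_iff_lt hy hz).1 hYZ)
  rw [hslope_xy, hslope_yz]
  exact hk htD htD' (ht.2.trans ht'.1).le

end DerivRatio

section GeneralizedTrig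

variable {p q : ℝ}

lemma one_sub_rpow_pos (hq : 0 < q) {u : ℝ} (hu : u ∈ Ioo (0 : ℝ) 1) : 0 < 1 - u ^ q :=
  sub_pos.2 (rpow_lt_one hu.1.le hu.2 hq)

lemma min_one_mul_one_sub_le_one_sub_rpow {t : ℝ} (hq : 0 < q) (ht : t ∈ Ioo (0 : ℝ) 1) :
    min 1 q * (1 - t) ≤ 1 - t ^ q := by
  have hbernoulli := rpow_one_add_le_one_add_mul_self (s := t - 1) (p := min 1 q)
    (by linarith [ht.1]) (by positivity) (min_le_left 1 q)
  rw [add_sub_cancel] at hbernoulli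
  have hexponent : t ^ q ≤ t ^ min 1 q :=
    rpow_le_rpow_of_exponent_ge ht.1 ht.2.le (min_le_right 1 q)
  linarith

lemma intervalIntegrable_one_sub_rpow (hp : 1 < p) (hq : 0 < q) :
    IntervalIntegrable (fun t : ℝ => (1 - t ^ q) ^ (-(1 / p))) MeasureTheory.volume 0 1 := by
  have hp₁ : 1 / p < 1 := (div_lt_one (by positivity)).2 hp
  have hdominating : IntervalIntegrable (fun t : ℝ => min 1 q ^ (-(1 / p)) * (1 - t) ^ (-(1 / p)))
      MeasureTheory.volume 0 1 := by
    have := (intervalIntegral.intervalIntegrable_rpow' (a := 0) (b := 1) (r := -(1 / p))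
      (by linarith)).comp_sub_left 1
    simpa using this.symm.const_mul (min 1 q ^ (-(1 / p)))
  refine hdominating.mono_fun (Measurable.aestronglyMeasurable (by fun_prop)) ?_
  rw [uIoc_of_le zero_le_one, ← MeasureTheory.restrict_Ioo_eq_restrict_Ioc]
  filter_upwards [MeasureTheory.ae_restrict_mem measurableSet_Ioo] with t ht
  have ht₁ : 0 < 1 - t := sub_pos.2 ht.2
  have hpos := one_sub_rpow_pos hq ht
  rw [norm_of_nonneg (by positivity), norm_of_nonneg (by positivity),
    ← mul_rpow (by positivity) ht₁.le]
  exact rpow_le_rpow_of_nonpos (by positivity) (min_one_mul_one_sub_le_one_sub_rpow hq ht)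
    (neg_nonpos.2 (by positivity))

lemma intervalIntegrable_one_sub_rpow_of_mem (hp : 1 < p) (hq : 0 < q) {x y : ℝ}
    (hx : x ∈ Icc (0 : ℝ) 1) (hy : y ∈ Icc (0 : ℝ) 1) :
    IntervalIntegrable (fun t : ℝ => (1 - t ^ q) ^ (-(1 / p))) MeasureTheory.volume x y :=
  (intervalIntegrable_one_sub_rpow hp hq).mono_set <| by
    rw [uIcc_of_le zero_le_one]
    exact uIcc_subset_Icc hx hy

lemma arcsinPQ_zero : arcsinPQ p q 0 = 0 := intervalIntegral.integral_same

lemma continuousOn_arcsinPQ (hp : 1 < p) (hq : 0 < q) :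
    ContinuousOn (arcsinPQ p q) (Icc 0 1) := by
  have hcont := intervalIntegral.continuousOn_primitive_interval'
    (intervalIntegrable_one_sub_rpow hp hq) left_mem_uIcc
  rwa [uIcc_of_le zero_le_one] at hcont

lemma hasDerivAt_arcsinPQ (hp : 1 < p) (hq : 0 < q) {u : ℝ} (hu : u ∈ Ioo (0 : ℝ) 1) :
    HasDerivAt (arcsinPQ p q) ((1 - u ^ q) ^ (-(1 / p))) u := by
  refine intervalIntegral.integral_hasDerivAt_right
    (intervalIntegrable_one_sub_rpow_of_mem hp hq (by simp) ⟨hu.1.le, hu.2.le⟩)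
    (Measurable.stronglyMeasurable (by fun_prop)).stronglyMeasurableAtFilter ?_
  exact (continuousAt_const.sub (continuousAt_rpow_const _ _ (Or.inl hu.1.ne'))).rpow_const
    (Or.inl (one_sub_rpow_pos hq hu).ne')

lemma strictMonoOn_arcsinPQ (hp : 1 < p) (hq : 0 < q) :
    StrictMonoOn (arcsinPQ p q) (Icc 0 1) := by
  refine strictMonoOn_of_hasDerivWithinAt_pos (f' := fun u => (1 - u ^ q) ^ (-(1 / p)))
    (convex_Icc 0 1) (continuousOn_arcsinPQ hp hq) ?_ ?_ <;> rw [interior_Icc] <;> intro u hu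
  · exact (hasDerivAt_arcsinPQ hp hq hu).hasDerivWithinAt
  · exact rpow_pos_of_pos (one_sub_rpow_pos hq hu) _

lemma image_arcsinPQ_Ioo (hp : 1 < p) (hq : 0 < q) :
    arcsinPQ p q '' Ioo 0 1 = Ioo 0 (arcsinPQ p q 1) := by
  have hmono := strictMonoOn_arcsinPQ hp hq
  apply Subset.antisymm
  · rintro _ ⟨u, hu, rfl⟩
    have hu' : u ∈ Icc (0 : ℝ) 1 := ⟨hu.1.le, hu.2.le⟩
    exact ⟨arcsinPQ_zero.symm.trans_lt (hmono (by simp) hu' hu.1), hmono hu' (by simp) hu.2⟩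
  · simpa only [arcsinPQ_zero] using
      intermediate_value_Ioo zero_le_one (continuousOn_arcsinPQ hp hq)

lemma sinPQ_arcsinPQ (hp : 1 < p) (hq : 0 < q) {u : ℝ} (hu : u ∈ Icc (0 : ℝ) 1) :
    sinPQ p q (arcsinPQ p q u) = u :=
  (strictMonoOn_arcsinPQ hp hq).injOn.leftInvOn_invFunOn hu

/-- The generalized tangent as a function of the generalized sine `u`, that is `tan_{p,q} x` for
`u = sin_{p,q} x`. -/
noncomputable def tanOfSin (p q u : ℝ) : ℝ := u * (1 - u ^ q) ^ (-(1 / p))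

/-- The derivative of `tan_{p,q}` at `x` as a function of the generalized sine `u = sin_{p,q} x`;
equivalently, the quotient of the derivatives of `tanOfSin p q` and `arcsinPQ p q` at `u`. -/
noncomputable def tanSlope (p q u : ℝ) : ℝ := 1 + q / p * (u ^ q / (1 - u ^ q))

lemma tanPQ_arcsinPQ (hp : 1 < p) (hq : 0 < q) {u : ℝ} (hu : u ∈ Ioo (0 : ℝ) 1) :
    tanPQ p q (arcsinPQ p q u) = tanOfSin p q u := by
  rw [tanPQ, cosPQ, sinPQ_arcsinPQ hp hq ⟨hu.1.le, hu.2.le⟩, tanOfSin,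
    rpow_neg (one_sub_rpow_pos hq hu).le, div_eq_mul_inv]

lemma tanSlope_pos (hp : 0 < p) (hq : 0 < q) {u : ℝ} (hu : u ∈ Ioo (0 : ℝ) 1) :
    0 < tanSlope p q u := by
  have := one_sub_rpow_pos hq hu
  have := hu.1
  unfold tanSlope
  positivity

lemma monotoneOn_tanSlope (hp : 0 < p) (hq : 0 < q) :
    MonotoneOn (tanSlope p q) (Ioo 0 1) := by
  intro u hu v hv huv
  have hv' := one_sub_rpow_pos hq hv
  have := hu.1.le
  have := hv.1.le
  unfold tanSlope
  gcongr

lemma antitoneOn_inv_tanSlope (hp : 0 < p) (hq : 0 < q) :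
    AntitoneOn (fun u => (tanSlope p q u)⁻¹) (Ioo 0 1) := fun _ hu _ hv huv =>
  inv_anti₀ (tanSlope_pos hp hq hu) (monotoneOn_tanSlope hp hq hu hv huv)

lemma hasDerivAt_tanOfSin (hq : 0 < q) {u : ℝ} (hu : u ∈ Ioo (0 : ℝ) 1) :
    HasDerivAt (tanOfSin p q) ((1 - u ^ q) ^ (-(1 / p)) * tanSlope p q u) u := by
  have hu₀ := hu.1.ne'
  have hpos := one_sub_rpow_pos hq hu
  have hderiv := (hasDerivAt_id u).mul (((hasDerivAt_rpow_const (p := q)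
    (Or.inl hu₀)).const_sub 1).rpow_const (p := -(1 / p)) (Or.inl hpos.ne'))
  refine hderiv.congr_deriv ?_
  rw [tanSlope, rpow_sub_one hpos.ne', rpow_sub_one hu₀]
  simp only [id]
  field_simp

lemma deriv_tanOfSin_pos (hp : 0 < p) (hq : 0 < q) {u : ℝ} (hu : u ∈ Ioo (0 : ℝ) 1) :
    0 < (1 - u ^ q) ^ (-(1 / p)) * tanSlope p q u :=
  mul_pos (rpow_pos_of_pos (one_sub_rpow_pos hq hu) _) (tanSlope_pos hp hq hu)

lemma strictMonoOn_tanOfSin (hp : 0 < p) (hq : 0 < q) :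
    StrictMonoOn (tanOfSin p q) (Ioo 0 1) :=
  strictMonoOn_of_hasDerivAt_pos (convex_Ioo 0 1) (fun _ hu => hasDerivAt_tanOfSin hq hu)
    fun _ hu => deriv_tanOfSin_pos hp hq hu

lemma image_tanOfSin_Ioo (hp : 0 < p) (hq : 0 < q) : tanOfSin p q '' Ioo 0 1 = Ioi 0 := by
  apply Subset.antisymm
  · rintro _ ⟨u, hu, rfl⟩
    exact mul_pos hu.1 (rpow_pos_of_pos (one_sub_rpow_pos hq hu) _)
  · intro r (hr : 0 < r)
    -- Clearing the denominator gives an equation that makes sense on all of `[0, 1]`.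
    have hcont : ContinuousOn (fun u : ℝ => u - r * (1 - u ^ q) ^ (1 / p)) (Icc 0 1) := by
      have hcos : Continuous fun u : ℝ => (1 - u ^ q) ^ (1 / p) :=
        (continuous_const.sub (continuous_rpow_const hq.le)).rpow_const
          fun _ => Or.inr (by positivity)
      fun_prop
    obtain ⟨u, hu, hur⟩ := intermediate_value_Ioo zero_le_one hcont
      (show (0 : ℝ) ∈ Ioo _ _ by simp [zero_rpow hq.ne', hr, hp.ne'])
    have hpos := one_sub_rpow_pos hq hu
    refine ⟨u, hu, ?_⟩
    rw [tanOfSin, rpow_neg hpos.le, ← div_eq_mul_inv, div_eq_iff (by positivity)]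
    exact sub_eq_zero.1 hur

lemma injOn_tanPQ (hp : 1 < p) (hq : 0 < q) :
    InjOn (tanPQ p q) (Ioo 0 (arcsinPQ p q 1)) := by
  rw [← image_arcsinPQ_Ioo hp hq]
  refine InjOn.image_of_comp ?_
  exact (strictMonoOn_tanOfSin (by positivity) hq).injOn.congr
    fun u hu => (tanPQ_arcsinPQ hp hq hu).symm

lemma arctanPQ_tanOfSin (hp : 1 < p) (hq : 0 < q) {u : ℝ} (hu : u ∈ Ioo (0 : ℝ) 1) :
    arctanPQ p q (tanOfSin p q u) = arcsinPQ p q u := by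
  rw [← tanPQ_arcsinPQ hp hq hu]
  refine (injOn_tanPQ hp hq).leftInvOn_invFunOn ?_
  rw [← image_arcsinPQ_Ioo hp hq]
  exact mem_image_of_mem _ hu

lemma arctanPQ_pos (hp : 1 < p) (hq : 0 < q) {x : ℝ} (hx : 0 < x) : 0 < arctanPQ p q x := by
  rw [← mem_Ioi, ← image_tanOfSin_Ioo (p := p) (by positivity) hq] at hx
  obtain ⟨u, hu, rfl⟩ := hx
  rw [arctanPQ_tanOfSin hp hq hu]
  exact ((image_arcsinPQ_Ioo hp hq).subset (mem_image_of_mem _ hu)).1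

lemma concaveOn_arctanPQ (hp : 1 < p) (hq : 0 < q) : ConcaveOn ℝ (Ioi 0) (arctanPQ p q) := by
  have hp₀ : 0 < p := by positivity
  rw [← image_tanOfSin_Ioo hp₀ hq]
  refine concaveOn_image_of_antitoneOn_deriv_ratio (convex_Ioo 0 1)
    (fun u hu => arctanPQ_tanOfSin hp hq hu) (fun u hu => hasDerivAt_tanOfSin hq hu)
    (fun u hu => deriv_tanOfSin_pos hp₀ hq hu)
    (fun u hu => (hasDerivAt_arcsinPQ hp hq hu).congr_deriv ?_) (antitoneOn_inv_tanSlope hp₀ hq)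
  have := (tanSlope_pos hp₀ hq hu).ne'
  field_simp

end GeneralizedTrig

theorem arctanPQ_aa_concave_general {p q a : ℝ} (hp : 1 < p) (hq : 0 < q) (ha : 1 ≤ a) :
    PowerMeanConcaveOn a a (Ioi 0) (arctanPQ p q) :=
  powerMeanConcaveOn_of_concaveOn (concaveOn_arctanPQ hp hq)
    (fun _ hx => (arctanPQ_pos hp hq hx).le) ha

theorem arctanPQ_aa_concave (p q a : ℝ) (hp : 1 < p) (hq : 1 < q) (ha : 1 ≤ a)
    (r s : ℝ) (hr : r ∈ Set.Ioo (0:ℝ) 1) (hs : s ∈ Set.Ioo (0:ℝ) 1) :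
    arctanPQ p q (((r ^ a + s ^ a) / 2) ^ (1/a)) ≥
      ((arctanPQ p q r ^ a + arctanPQ p q s ^ a) / 2) ^ (1/a) :=
  arctanPQ_aa_concave_general hp (zero_lt_one.trans hq) ha hr.1 hs.1
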